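/- arXiv:2012.01492 — 2 statements merged into one kernel-verified Lean document; each statement's English description precedes it below -/
import Mathlib

section
/- For all constants K ≥ 1 and c > 0 there exist constants C > 0 and δ > 0 with the following property. Let 𝐝 = (d_1,…,d_n) be a degree sequence with even sum M and maximum entry Δ satisfying Δ² ≤ δM; let H₁, H₂ be edge-disjoint graphs on [n] with 𝐝^{H₁} ⪯ 𝐝 and Δ_{H₂} ≤ KΔ; set 𝐝̃ = 𝐝 − 𝐝^{H₁}, M̃ = Σ_i d̃_i, M̃₂ = Σ_i d̃_i(d̃_i−1), and assume M̃ ≥ cM; let u ≠ v with uv ∉ H₁ ∪ H₂. Let G be chosen uniformly at random from the (assumed nonempty) set 𝒢⁺ of graphs with degree sequence 𝐝 that contain H₁ and the edge uv and contain no edge of H₂. Let X_u be the number of ordered pairs (x,y) such that xy is an edge of G not in H₁, {x,y} ∩ {u,v} = ∅, and ux is an edge of G ∪ H₂; let X_v be the analogous count with vy an edge of G ∪ H₂; and let X_{uv} be the number of such pairs (x,y) with both ux and vy edges of G ∪ H₂. Then |E X_{uv}| ≤ C·Δ⁴/M, |E X_u − (Σ_{x∈N_{H₁∪H₂}(u)}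 d̃_x + (d̃_u − 1)·M̃₂/M̃)| ≤ C·Δ⁴/M, and |E X_v − (Σ_{y∈N_{H₁∪H₂}(v)} d̃_y + (d̃_v − 1)·M̃₂/M̃)| ≤ C·Δ⁴/M. -/
open Filter

noncomputable section

/-- The degree of the vertex `v` in the simple graph `G`. -/
def deg {n : ℕ} (G : SimpleGraph (Fin n)) (v : Fin n) : ℕ := (G.neighborSet v).ncard

/-- The number of edges of `G`. -/
def nedges {n : ℕ} (G : SimpleGraph (Fin n)) : ℕ := G.edgeSet.ncard

/-- The maximum degree of `G`. -/
def maxDeg {n : ℕ} (G : SimpleGraph (Fin n)) : ℕ := Finset.univ.sup (deg G)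

/-- The expectation of `X` for a graph chosen uniformly at random among all simple graphs
on `[n]` satisfying `base`. -/
def expect {n : ℕ} (base : SimpleGraph (Fin n) → Prop) (X : SimpleGraph (Fin n) → ℝ) : ℝ :=
  (∑ᶠ G ∈ {G : SimpleGraph (Fin n) | base G}, X G) /
    (Nat.card {G : SimpleGraph (Fin n) // base G} : ℝ)

/-- `X_u`: the number of ordered pairs `(x,y)` such that `xy` is an edge of `G` not in `H₁`,
`{x,y} ∩ {u,v} = ∅`, and `ux` is an edge of `G ∪ H₂`. -/
def Xu {n : ℕ} (H₁ H₂ : SimpleGraph (Fin n)) (u v : Fin n) (G : SimpleGraph (Fin n)) : ℕ :=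
  Nat.card {p : Fin n × Fin n // G.Adj p.1 p.2 ∧ ¬ H₁.Adj p.1 p.2 ∧
    p.1 ≠ u ∧ p.1 ≠ v ∧ p.2 ≠ u ∧ p.2 ≠ v ∧ (G ⊔ H₂).Adj u p.1}

/-- `X_v`: the analogous count with `vy` an edge of `G ∪ H₂`. -/
def Xv {n : ℕ} (H₁ H₂ : SimpleGraph (Fin n)) (u v : Fin n) (G : SimpleGraph (Fin n)) : ℕ :=
  Nat.card {p : Fin n × Fin n // G.Adj p.1 p.2 ∧ ¬ H₁.Adj p.1 p.2 ∧
    p.1 ≠ u ∧ p.1 ≠ v ∧ p.2 ≠ u ∧ p.2 ≠ v ∧ (G ⊔ H₂).Adj v p.2}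

/-- `X_{uv}`: such pairs with both `ux` and `vy` edges of `G ∪ H₂`. -/
def Xuv {n : ℕ} (H₁ H₂ : SimpleGraph (Fin n)) (u v : Fin n) (G : SimpleGraph (Fin n)) : ℕ :=
  Nat.card {p : Fin n × Fin n // G.Adj p.1 p.2 ∧ ¬ H₁.Adj p.1 p.2 ∧
    p.1 ≠ u ∧ p.1 ≠ v ∧ p.2 ≠ u ∧ p.2 ≠ v ∧ (G ⊔ H₂).Adj u p.1 ∧ (G ⊔ H₂).Adj v p.2}

/-!
Deleting `L = H₁ ∪ {uv}` turns a random graph of `𝒢⁺` into a uniformly random graph `F` with the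
residual degree sequence `r` that avoids `B = H₁ ∪ {uv} ∪ H₂`. Write `R = ∑ r x` and let `Q` bound
`r x + deg B x`.

Replacing two edges `pq` and `ab` of `F` by `pa` and `qb` is an involution on the configurations
`(F, q, a, b)`, and for fixed `F` and `pq` all but `4 Q²` of the `R` ordered edges `ab` may be used.
Hence `R * 𝔼 ∑ f F q`, the sum being over the neighbours `q` of `p`, agrees up to `O(Q²)` times
`𝔼 ∑ |f F q|` with the expected value of `∑ f F₁ a` over all such `q` and all switchings of `F` at
`pq` into a graph `F₁` with the edge `pa`. Thus a neighbour of `p` behaves like a vertex chosen with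
probability `r x / R`, and `p` has on average `O(Q³ / R)` neighbours that are adjacent in `F ∪ B` to
another given vertex.

Counted by their first vertex `x`, the pairs of `X_u` number the sum of `r x` over the
`B`-neighbours `x ≠ v` of `u`, plus the sum of `r x - 1` over the `F`-neighbours of `u`, minus the
number of `F`-neighbours of `v` adjacent to `u`. The first sum is constant, the second has mean
about `r u * ∑ r x (r x - 1) / R`, and the last term is small in mean. The same comparison bounds
`X_{uv}`, and `X_v` is `X_u` with `u` and `v` exchanged.
-/

section Degree

variable {V : Type*} {G H : SimpleGraph V} {x : V}

lemma degree_sup_of_disjoint [Fintype (G.neighborSet x)] [Fintype (H.neighborSet x)]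
    [Fintype ((G ⊔ H).neighborSet x)] (h : Disjoint G H) :
    (G ⊔ H).degree x = G.degree x + H.degree x := by
  classical
  rw [← SimpleGraph.card_neighborFinset_eq_degree, SimpleGraph.neighborFinset_sup_of_disjoint x h,
    Finset.card_disjUnion]
  rfl

lemma degree_sup_le [Fintype (G.neighborSet x)] [Fintype (H.neighborSet x)]
    [Fintype ((G ⊔ H).neighborSet x)] :
    (G ⊔ H).degree x ≤ G.degree x + H.degree x := by
  classical
  rw [← SimpleGraph.card_neighborFinset_eq_degree, SimpleGraph.neighborFinset_sup]
  exact Finset.card_union_le _ _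

lemma degree_sdiff_add_degree [Fintype (G.neighborSet x)] [Fintype (H.neighborSet x)]
    [Fintype ((G \ H).neighborSet x)] (h : H ≤ G) :
    (G \ H).degree x + H.degree x = G.degree x := by
  classical
  rw [← SimpleGraph.card_neighborFinset_eq_degree, SimpleGraph.neighborFinset_sdiff]
  exact Finset.card_sdiff_add_card_eq_card fun y hy ↦ by
    simpa using h (by simpa using hy)

lemma degree_edge [DecidableEq V] {p q : V} [Fintype ((SimpleGraph.edge p q).neighborSet x)]
    (h : p ≠ q) : (SimpleGraph.edge p q).degree x = if x = p ∨ x = q then 1 else 0 := by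
  have hN : (SimpleGraph.edge p q).neighborFinset x =
      if x = p then {q} else if x = q then {p} else ∅ := by
    ext y
    rw [SimpleGraph.mem_neighborFinset, SimpleGraph.edge_adj]
    grind
  rw [← SimpleGraph.card_neighborFinset_eq_degree, hN]
  split_ifs <;> simp_all

end Degree

section Switching

open SimpleGraph

variable {V : Type*}

/-- The switching of `F` that replaces the edges `pq` and `ab` by `pa` and `qb`. -/
def switch (F : SimpleGraph V) (p q a b : V) : SimpleGraph V :=
  (F \ (edge p q ⊔ edge a b)) ⊔ (edge p a ⊔ edge q b)

/-- The switching of `F` that replaces the edges `pq` and `ab` by `pa` and `qb` is admissible with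
respect to the graph `B` of forbidden edges: it yields a graph with the same degrees, and the new
edges are not in `B`. -/
structure IsSwitching (B F : SimpleGraph V) (p q a b : V) : Prop where
  adj_left : F.Adj p q
  adj_right : F.Adj a b
  compl_adj_left : (F ⊔ B)ᶜ.Adj p a
  compl_adj_right : (F ⊔ B)ᶜ.Adj q b

lemma sdiff_sup_sdiff_sup {α : Type*} [BooleanAlgebra α] {x y z : α} (hy : y ≤ x)
    (hz : Disjoint z x) : ((x \ y ⊔ z) \ z) ⊔ y = x := by
  rw [sup_sdiff_right_self, sdiff_sdiff_comm, hz.symm.sdiff_eq_left, sdiff_sup_cancel hy]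

namespace IsSwitching

variable {B F : SimpleGraph V} {p q a b x : V}

lemma edges_le (h : IsSwitching B F p q a b) : edge p q ⊔ edge a b ≤ F :=
  sup_le ((edge_le_iff _).2 (.inr h.adj_left)) ((edge_le_iff _).2 (.inr h.adj_right))

lemma disjoint_new_edges (h : IsSwitching B F p q a b) :
    Disjoint (edge p a ⊔ edge q b) (F ⊔ B) :=
  le_compl_iff_disjoint_right.1 <|
    sup_le ((edge_le_iff _).2 (.inr h.compl_adj_left)) ((edge_le_iff _).2 (.inr h.compl_adj_right))

lemma switch_switch (h : IsSwitching B F p q a b) :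
    switch (switch F p q a b) p a q b = F :=
  sdiff_sup_sdiff_sup h.edges_le (h.disjoint_new_edges.mono_right le_sup_left)

lemma disjoint_switch (h : IsSwitching B F p q a b) (hB : Disjoint F B) :
    Disjoint (switch F p q a b) B :=
  (hB.mono_left sdiff_le).sup_left (h.disjoint_new_edges.mono_right le_sup_right)

lemma ne (h : IsSwitching B F p q a b) : p ≠ a ∧ q ≠ b :=
  ⟨h.compl_adj_left.ne, h.compl_adj_right.ne⟩

lemma disjoint_edges (h : IsSwitching B F p q a b) :
    Disjoint (edge p q) (edge a b) ∧ Disjoint (edge p a) (edge q b) := by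
  have := h.compl_adj_left
  have := h.compl_adj_right
  have := h.adj_left.ne
  have := h.adj_right.ne
  have := h.adj_right.symm
  simp only [compl_adj, sup_adj] at *
  simp only [disjoint_left, edge_adj]
  grind

lemma symm (h : IsSwitching B F p q a b) (hB : Disjoint F B) :
    IsSwitching B (switch F p q a b) p a q b := by
  obtain ⟨hpq, hab, hpa, hqb⟩ := h
  have hBpq := disjoint_left.1 hB _ _ hpq
  have hBab := disjoint_left.1 hB _ _ hab
  have := hpq.ne
  have := hab.ne
  have := hab.symm
  simp only [compl_adj, sup_adj] at hpa hqb
  constructor <;> simp only [switch, compl_adj, sup_adj, sdiff_adj, edge_adj] <;> grind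

lemma degree_switch [Fintype V] [DecidableRel F.Adj]
    [Fintype ((switch F p q a b).neighborSet x)] (h : IsSwitching B F p q a b) :
    (switch F p q a b).degree x = F.degree x := by
  classical
  have hedges : (edge p a ⊔ edge q b).degree x = (edge p q ⊔ edge a b).degree x := by
    rw [degree_sup_of_disjoint h.disjoint_edges.1, degree_sup_of_disjoint h.disjoint_edges.2,
      degree_edge h.adj_left.ne, degree_edge h.adj_right.ne, degree_edge h.ne.1, degree_edge h.ne.2]
    have := h.adj_left.ne
    have := h.adj_right.ne
    have := h.ne
    grind
  have hdisj : Disjoint (F \ (edge p q ⊔ edge a b)) (edge p a ⊔ edge q b) :=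
    (h.disjoint_new_edges.mono_right (sdiff_le.trans le_sup_left)).symm
  rw [← degree_sdiff_add_degree h.edges_le, ← hedges, ← degree_sup_of_disjoint hdisj]
  congr!

lemma adj_left_of_switch (h : IsSwitching B F p q a b) (hx : x ≠ a)
    (hadj : (switch F p q a b).Adj p x) : F.Adj p x := by
  have := h.adj_left.ne
  have := h.adj_right.symm
  have := h.compl_adj_left
  simp only [switch, compl_adj, sup_adj, sdiff_adj, edge_adj] at *
  grind

lemma adj_right_of_switch (h : IsSwitching B F p q a b) (hx : x ≠ p)
    (hadj : (switch F p q a b).Adj a x) : F.Adj a x := by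
  have := h.adj_left
  have := h.adj_right.ne
  have := h.compl_adj_left
  simp only [switch, compl_adj, sup_adj, sdiff_adj, edge_adj] at *
  grind

end IsSwitching

end Switching

section Counting

open SimpleGraph Finset
open scoped BigOperators

attribute [local instance] Classical.propDecidable

variable {V : Type*} [Fintype V] {r : V → ℕ} {B F : SimpleGraph V} {p q u v : V} {Q : ℕ}

/-- The set of graphs with degree sequence `r` that have no edge in common with `B`. -/
def graphsAvoiding (r : V → ℕ) (B : SimpleGraph V) : Finset (SimpleGraph V) :=
  {F | (∀ x, F.degree x = r x) ∧ Disjoint F B}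

lemma mem_graphsAvoiding :
    F ∈ graphsAvoiding r B ↔ (∀ x, F.degree x = r x) ∧ Disjoint F B := by
  simp [graphsAvoiding]

lemma IsSwitching.switch_mem_graphsAvoiding {a b : V} (h : IsSwitching B F p q a b)
    (hF : F ∈ graphsAvoiding r B) : switch F p q a b ∈ graphsAvoiding r B := by
  rw [mem_graphsAvoiding] at hF ⊢
  exact ⟨fun x ↦ h.degree_switch.trans (hF.1 x), h.disjoint_switch hF.2⟩

/-- The ordered edges `ab` of `F` with which the edge `pq` can be switched. -/
def partners (B F : SimpleGraph V) (p q : V) : Finset (V × V) :=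
  {e | IsSwitching B F p q e.1 e.2}

lemma mem_partners {e : V × V} : e ∈ partners B F p q ↔ IsSwitching B F p q e.1 e.2 := by
  simp [partners]

/-- Switching is an involution on the configurations `(F, q, a, b)`. -/
lemma sum_partners_switch {M : Type*} [AddCommMonoid M] (r : V → ℕ) (B : SimpleGraph V) (p : V)
    (f : SimpleGraph V → V → M) :
    ∑ F ∈ graphsAvoiding r B, ∑ q ∈ F.neighborFinset p, ∑ e ∈ partners B F p q,
        f (switch F p q e.1 e.2) e.1 =
      ∑ F ∈ graphsAvoiding r B, ∑ q ∈ F.neighborFinset p, ∑ _e ∈ partners B F p q, f F q := by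
  let S := (graphsAvoiding r B).sigma fun F ↦ (F.neighborFinset p).sigma (partners B F p)
  let i : (Σ _F : SimpleGraph V, Σ _q : V, V × V) → Σ _F : SimpleGraph V, Σ _q : V, V × V :=
    fun ⟨F, q, a, b⟩ ↦ ⟨switch F p q a b, a, q, b⟩
  have hmem : ∀ c ∈ S, i c ∈ S := by
    rintro ⟨F, q, a, b⟩ hc
    simp only [S, mem_sigma, mem_neighborFinset, mem_partners] at hc
    obtain ⟨hF, -, h⟩ := hc
    have h' := h.symm (mem_graphsAvoiding.1 hF).2
    simpa only [S, i, mem_sigma, mem_neighborFinset, mem_partners] using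
      ⟨h.switch_mem_graphsAvoiding hF, h'.adj_left, h'⟩
  have hinvol : ∀ c ∈ S, i (i c) = c := by
    rintro ⟨F, q, a, b⟩ hc
    simp only [S, mem_sigma, mem_partners] at hc
    simp only [i, hc.2.2.switch_switch]
  simp only [Finset.sum_sigma']
  exact Finset.sum_nbij' i i hmem hmem hinvol hinvol fun _ _ ↦ rfl

lemma partners_subset :
    partners B F p q ⊆ ({e | F.Adj e.1 e.2} : Finset (V × V)) := fun e he ↦ by
  simpa using (mem_partners.1 he).adj_right

lemma degree_le_of_mem (hF : F ∈ graphsAvoiding r B) (hQ : ∀ x, r x + B.degree x ≤ Q) (x : V) :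
    F.degree x ≤ Q :=
  ((mem_graphsAvoiding.1 hF).1 x).trans_le <| (Nat.le_add_right _ _).trans (hQ x)

lemma degree_sup_le_of_mem (hF : F ∈ graphsAvoiding r B) (hQ : ∀ x, r x + B.degree x ≤ Q) (x : V) :
    (F ⊔ B).degree x ≤ Q := by
  refine degree_sup_le.trans ?_
  rw [(mem_graphsAvoiding.1 hF).1]
  exact hQ x

lemma sum_adj_fst_mem {M : Type*} [AddCommMonoid M] (F : SimpleGraph V) (s : Finset V)
    (w : V → M) :
    ∑ e : V × V with F.Adj e.1 e.2 ∧ e.1 ∈ s, w e.1 = ∑ a ∈ s, F.degree a • w a := by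
  rw [Finset.sum_finset_product _ s (F.neighborFinset ·) (by simp [and_comm])]
  simp

lemma card_adj_fst_mem_le (hQ : ∀ x, F.degree x ≤ Q) (s : Finset V) :
    #{e : V × V | F.Adj e.1 e.2 ∧ e.1 ∈ s} ≤ #s * Q := by
  rw [card_eq_sum_ones, sum_adj_fst_mem F s fun _ ↦ 1]
  exact sum_le_card_nsmul _ _ Q (by simpa using fun x _ ↦ hQ x)

lemma card_adj_snd_mem_le (hQ : ∀ x, F.degree x ≤ Q) (s : Finset V) :
    #{e : V × V | F.Adj e.1 e.2 ∧ e.2 ∈ s} ≤ #s * Q := by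
  refine (card_le_card_of_injOn Prod.swap ?_ Prod.swap_injective.injOn).trans
    (card_adj_fst_mem_le hQ s)
  simp [Set.MapsTo, F.adj_comm]

lemma card_adj_sdiff_partners_le (hF : F ∈ graphsAvoiding r B)
    (hQ : ∀ x, r x + B.degree x ≤ Q) (hpq : F.Adj p q) :
    #(({e | F.Adj e.1 e.2} : Finset (V × V)) \ partners B F p q) ≤ 4 * Q ^ 2 := by
  let N (x : V) : Finset V := insert x ((F ⊔ B).neighborFinset x)
  have hsub : ({e | F.Adj e.1 e.2} : Finset (V × V)) \ partners B F p q ⊆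
      ({e | F.Adj e.1 e.2 ∧ e.1 ∈ N p} : Finset (V × V)) ∪
        ({e | F.Adj e.1 e.2 ∧ e.2 ∈ N q} : Finset (V × V)) := by
    rintro ⟨a, b⟩ he
    simp only [Finset.mem_sdiff, mem_filter_univ, mem_partners] at he
    simp only [N, mem_union, mem_filter_univ, mem_insert, mem_neighborFinset]
    by_contra! hab
    obtain ⟨ha, hb⟩ := hab.imp (· he.1) (· he.1)
    exact he.2 ⟨hpq, he.1, ⟨ha.1.symm, ha.2⟩, ⟨hb.1.symm, hb.2⟩⟩
  have hN (x : V) : #(N x) ≤ Q + 1 :=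
    (card_insert_le _ _).trans <| Nat.succ_le_succ (degree_sup_le_of_mem hF hQ x)
  have hdeg := degree_le_of_mem hF hQ
  have hQ₁ : 1 ≤ Q := ((F.degree_pos_iff_exists_adj p).2 ⟨q, hpq⟩).trans_le (hdeg p)
  calc _ ≤ _ := (card_le_card hsub).trans (card_union_le _ _)
    _ ≤ #(N p) * Q + #(N q) * Q :=
      Nat.add_le_add (card_adj_fst_mem_le hdeg _) (card_adj_snd_mem_le hdeg _)
    _ ≤ (Q + 1) * Q + (Q + 1) * Q := by gcongr <;> apply hN
    _ ≤ 4 * Q ^ 2 := by nlinarith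

lemma abs_sum_sub_sum_partners_le (hF : F ∈ graphsAvoiding r B)
    (hQ : ∀ x, r x + B.degree x ≤ Q) (hpq : F.Adj p q) {w : V → ℝ} {W : ℝ} (hw : ∀ x, |w x| ≤ W) :
    |∑ a, r a * w a - ∑ e ∈ partners B F p q, w e.1| ≤ 4 * Q ^ 2 * W := by
  have hall : ∑ a, r a * w a = ∑ e : V × V with F.Adj e.1 e.2, w e.1 := by
    simpa [(mem_graphsAvoiding.1 hF).1] using (sum_adj_fst_mem F univ w).symm
  have hW : 0 ≤ W := (abs_nonneg _).trans (hw p)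
  rw [hall, ← sum_sdiff_eq_sub partners_subset]
  calc _ ≤ _ := abs_sum_le_sum_abs _ _
    _ ≤ _ := sum_le_card_nsmul _ _ W fun e _ ↦ hw e.1
    _ ≤ _ := by
      rw [nsmul_eq_mul]
      gcongr
      exact_mod_cast card_adj_sdiff_partners_le hF hQ hpq

lemma abs_sum_mul_expect_sub_le (hQ : ∀ x, r x + B.degree x ≤ Q) (p : V)
    (f : SimpleGraph V → V → ℝ) :
    |(∑ x, r x) * 𝔼 F ∈ graphsAvoiding r B, ∑ q ∈ F.neighborFinset p, f F q -
        𝔼 F ∈ graphsAvoiding r B, ∑ q ∈ F.neighborFinset p, ∑ e ∈ partners B F p q,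
          f (switch F p q e.1 e.2) e.1| ≤
      4 * Q ^ 2 * 𝔼 F ∈ graphsAvoiding r B, ∑ q ∈ F.neighborFinset p, |f F q| := by
  have hswitch : (𝔼 F ∈ graphsAvoiding r B, ∑ q ∈ F.neighborFinset p, ∑ e ∈ partners B F p q,
        f (switch F p q e.1 e.2) e.1) =
      𝔼 F ∈ graphsAvoiding r B, ∑ q ∈ F.neighborFinset p, ∑ _e ∈ partners B F p q, f F q := by
    simp only [expect_eq_sum_div_card, sum_partners_switch]
  rw [hswitch, mul_expect, mul_expect, ← expect_sub_distrib]
  refine (abs_expect_le _ _).trans <| expect_le_expect fun F hF ↦ ?_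
  rw [mul_sum, mul_sum, ← sum_sub_distrib]
  refine (abs_sum_le_sum_abs _ _).trans <| sum_le_sum fun q hq ↦ ?_
  have hcard := abs_sum_sub_sum_partners_le hF hQ ((F.mem_neighborFinset p q).1 hq)
    (w := fun _ ↦ 1) (W := 1) (by simp)
  simp only [mul_one] at hcard
  rw [sum_const, nsmul_eq_mul, ← sub_mul, abs_mul]
  gcongr
  simpa using hcard

lemma abs_sum_neighborFinset_le (hF : F ∈ graphsAvoiding r B) (hQ : ∀ x, r x + B.degree x ≤ Q)
    {g : V → ℝ} {W : ℝ} (hW : 0 ≤ W) (hg : ∀ q, F.Adj p q → |g q| ≤ W) :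
    |∑ q ∈ F.neighborFinset p, g q| ≤ Q * W :=
  calc _ ≤ _ := abs_sum_le_sum_abs _ _
    _ ≤ F.degree p • W := sum_le_card_nsmul _ _ W (by simpa using hg)
    _ ≤ Q * W := by
      rw [nsmul_eq_mul]
      gcongr
      exact degree_le_of_mem hF hQ p

lemma abs_sum_mul_expect_sum_neighborFinset_sub_le (hne : (graphsAvoiding r B).Nonempty)
    (hQ : ∀ x, r x + B.degree x ≤ Q) (u : V) {w : V → ℝ} {W : ℝ} (hw : ∀ x, |w x| ≤ W) :
    |(∑ x, r x) * 𝔼 F ∈ graphsAvoiding r B, ∑ q ∈ F.neighborFinset u, w q -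
        r u * ∑ x, r x * w x| ≤ 8 * Q ^ 3 * W := by
  have hW : 0 ≤ W := (abs_nonneg _).trans (hw u)
  have habs : 𝔼 F ∈ graphsAvoiding r B, ∑ q ∈ F.neighborFinset u, |w q| ≤ Q * W :=
    expect_le hne fun F hF ↦ (le_abs_self _).trans <|
      abs_sum_neighborFinset_le hF hQ hW fun q _ ↦ by simpa using hw q
  have hpartners : |𝔼 F ∈ graphsAvoiding r B, ∑ q ∈ F.neighborFinset u,
      ∑ e ∈ partners B F u q, w e.1 - r u * ∑ x, r x * w x| ≤ Q * (4 * Q ^ 2 * W) := by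
    rw [← expect_const hne (r u * ∑ x, r x * w x), ← expect_sub_distrib]
    refine (abs_expect_le _ _).trans <| expect_le hne fun F hF ↦ ?_
    rw [← (mem_graphsAvoiding.1 hF).1 u, ← card_neighborFinset_eq_degree, ← nsmul_eq_mul,
      ← sum_const, ← sum_sub_distrib]
    refine abs_sum_neighborFinset_le hF hQ (by positivity) fun q hq ↦ ?_
    rw [abs_sub_comm]
    exact abs_sum_sub_sum_partners_le hF hQ hq hw
  calc _ ≤ _ := abs_sub_le _ _ _
    _ ≤ 4 * Q ^ 2 * (Q * W) + Q * (4 * Q ^ 2 * W) :=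
      add_le_add ((abs_sum_mul_expect_sub_le hQ u fun _ q ↦ w q).trans (by gcongr)) hpartners
    _ = 8 * Q ^ 3 * W := by ring

lemma sum_partners_le (hF : F ∈ graphsAvoiding r B) (hQ : ∀ x, r x + B.degree x ≤ Q)
    {g : V × V → ℝ} {W : ℝ} (hW : 0 ≤ W)
    (hg : ∀ e ∈ partners B F p q, g e ≤ if (F ⊔ B).Adj v e.1 then W else 0) :
    ∑ e ∈ partners B F p q, g e ≤ Q ^ 2 * W := by
  let N : Finset V := (F ⊔ B).neighborFinset v
  calc _ ≤ ∑ e ∈ partners B F p q, if (F ⊔ B).Adj v e.1 then W else 0 := sum_le_sum hg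
    _ ≤ ∑ e : V × V with F.Adj e.1 e.2, if (F ⊔ B).Adj v e.1 then W else 0 :=
      sum_le_sum_of_subset_of_nonneg partners_subset fun _ _ _ ↦ by positivity
    _ = #{e : V × V | F.Adj e.1 e.2 ∧ e.1 ∈ N} * W := by
      rw [← sum_filter, filter_filter, sum_const, nsmul_eq_mul]
      simp only [N, mem_neighborFinset]
    _ ≤ (Q * Q : ℕ) * W := by
      gcongr
      exact (card_adj_fst_mem_le (degree_le_of_mem hF hQ) N).trans <|
        Nat.mul_le_mul_right Q (degree_sup_le_of_mem hF hQ v)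
    _ = Q ^ 2 * W := by push_cast; ring

lemma sum_mul_expect_card_le (hQ : ∀ x, r x + B.degree x ≤ Q) {P : SimpleGraph V → V → Prop}
    {A : SimpleGraph V → Prop} [∀ F, DecidablePred (P F)] [DecidablePred A]
    (hPA : ∀ F q, P F q → A F)
    (hP : ∀ F q a b, IsSwitching B F p q a b → P (switch F p q a b) a → A F ∧ (F ⊔ B).Adj v a) :
    (∑ x, r x) * 𝔼 F ∈ graphsAvoiding r B, (#{q ∈ F.neighborFinset p | P F q} : ℝ) ≤
      5 * Q ^ 3 * 𝔼 F ∈ graphsAvoiding r B, if A F then 1 else 0 := by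
  let f (F : SimpleGraph V) (q : V) : ℝ := if P F q then 1 else 0
  let g (F : SimpleGraph V) : ℝ := if A F then 1 else 0
  have hg (F : SimpleGraph V) : 0 ≤ g F := by positivity
  have hf : ∀ F ∈ graphsAvoiding r B, ∑ q ∈ F.neighborFinset p, |f F q| ≤ Q * g F := fun F hF ↦
    (le_abs_self _).trans <| abs_sum_neighborFinset_le hF hQ (hg F) fun q _ ↦ by
      rw [abs_abs]
      grind
  have hswitch : ∀ F ∈ graphsAvoiding r B, ∑ q ∈ F.neighborFinset p, ∑ e ∈ partners B F p q,
      f (switch F p q e.1 e.2) e.1 ≤ Q * (Q ^ 2 * g F) := fun F hF ↦ by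
    refine (le_abs_self _).trans <| abs_sum_neighborFinset_le hF hQ (by positivity) fun q _ ↦ ?_
    rw [abs_of_nonneg (sum_nonneg fun e _ ↦ by positivity)]
    refine sum_partners_le (v := v) hF hQ (hg F) fun e he ↦ ?_
    have := hP F q e.1 e.2 (mem_partners.1 he)
    grind
  have hcard (F : SimpleGraph V) :
      (#{q ∈ F.neighborFinset p | P F q} : ℝ) = ∑ q ∈ F.neighborFinset p, f F q := by
    rw [sum_boole]
  have hdiff := (abs_sub_le_iff.1 (abs_sum_mul_expect_sub_le hQ p f)).1
  simp only [hcard]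
  calc _ ≤ _ := sub_le_iff_le_add'.1 hdiff
    _ ≤ 𝔼 F ∈ graphsAvoiding r B, Q * (Q ^ 2 * g F) +
        4 * Q ^ 2 * 𝔼 F ∈ graphsAvoiding r B, Q * g F := by
      gcongr
      · exact hswitch _ ‹_›
      · exact hf _ ‹_›
    _ = 5 * Q ^ 3 * 𝔼 F ∈ graphsAvoiding r B, g F := by
      simp only [← mul_expect]
      ring

lemma sum_mul_expect_card_common_neighbors_le (hne : (graphsAvoiding r B).Nonempty)
    (hQ : ∀ x, r x + B.degree x ≤ Q) (huv : u ≠ v) :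
    (∑ x, r x) * 𝔼 F ∈ graphsAvoiding r B, (#{q ∈ F.neighborFinset v | (F ⊔ B).Adj u q} : ℝ) ≤
      5 * Q ^ 3 := by
  have h := sum_mul_expect_card_le hQ (p := v) (v := u) (P := fun F q ↦ (F ⊔ B).Adj u q)
    (A := fun _ ↦ True) (fun _ _ _ ↦ trivial) fun F q a b h hadj ↦
      ⟨trivial, hadj.imp_left fun ha ↦ (h.adj_right_of_switch huv ha.symm).symm⟩
  simpa [hne] using h

/-- The ordered edges `xy` of `F` outside `{u, v}` such that `ux` is an edge of `F` or of `B`. For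
`B = H₁ ∪ {uv} ∪ H₂` these are the pairs counted by `Xu` in the graph `F ∪ H₁ ∪ {uv}`. -/
def forwardPairs (B F : SimpleGraph V) (u v : V) : Finset (V × V) :=
  {e | F.Adj e.1 e.2 ∧ e.1 ≠ u ∧ e.1 ≠ v ∧ e.2 ≠ u ∧ e.2 ≠ v ∧ (F ⊔ B).Adj u e.1}

lemma card_filter_forwardPairs_le (B F : SimpleGraph V) (u v : V) :
    #{e ∈ forwardPairs B F u v | (F ⊔ B).Adj v e.2} ≤ ∑ p, #{q ∈ F.neighborFinset p |
      (F ⊔ B).Adj u p ∧ (F ⊔ B).Adj v q ∧ q ≠ u ∧ p ≠ v} := by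
  rw [← card_sigma]
  refine card_le_card_of_injOn (fun e ↦ ⟨e.1, e.2⟩) ?_ fun e _ e' _ h ↦ by simp_all [Prod.ext_iff]
  intro e he
  simp_all [forwardPairs]

lemma sum_mul_expect_card_filter_forwardPairs_le (hne : (graphsAvoiding r B).Nonempty)
    (hQ : ∀ x, r x + B.degree x ≤ Q) (u v : V) :
    (∑ x, r x) * 𝔼 F ∈ graphsAvoiding r B,
      (#{e ∈ forwardPairs B F u v | (F ⊔ B).Adj v e.2} : ℝ) ≤ 5 * Q ^ 4 := by
  let P (p : V) (F : SimpleGraph V) (q : V) : Prop :=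
    (F ⊔ B).Adj u p ∧ (F ⊔ B).Adj v q ∧ q ≠ u ∧ p ≠ v
  have hP (p : V) : (∑ x, r x) * 𝔼 F ∈ graphsAvoiding r B, (#{q ∈ F.neighborFinset p | P p F q} : ℝ)
      ≤ 5 * Q ^ 3 * 𝔼 F ∈ graphsAvoiding r B, if (F ⊔ B).Adj u p then 1 else 0 :=
    sum_mul_expect_card_le hQ (P := P p) (A := fun F ↦ (F ⊔ B).Adj u p) (v := v)
      (fun F q h ↦ h.1) fun F q a b h ⟨hu, hv, hau, hpv⟩ ↦
        ⟨hu.imp_left fun hp ↦ (h.adj_left_of_switch hau.symm hp.symm).symm,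
          hv.imp_left fun ha ↦ (h.adj_right_of_switch hpv.symm ha.symm).symm⟩
  calc _ ≤ (∑ x, r x) * 𝔼 F ∈ graphsAvoiding r B,
          ∑ p, (#{q ∈ F.neighborFinset p | P p F q} : ℝ) := by
        gcongr
        exact_mod_cast card_filter_forwardPairs_le B F u v
    _ = ∑ p, (∑ x, r x) * 𝔼 F ∈ graphsAvoiding r B, (#{q ∈ F.neighborFinset p | P p F q} : ℝ) := by
      rw [expect_sum_comm, mul_sum]
    _ ≤ ∑ p, 5 * (Q : ℝ) ^ 3 * 𝔼 F ∈ graphsAvoiding r B, if (F ⊔ B).Adj u p then 1 else 0 :=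
      sum_le_sum fun p _ ↦ hP p
    _ = 5 * Q ^ 3 * 𝔼 F ∈ graphsAvoiding r B, ((F ⊔ B).degree u : ℝ) := by
      rw [← mul_sum, ← expect_sum_comm]
      simp [sum_boole, ← card_neighborFinset_eq_degree, neighborFinset_eq_filter]
    _ ≤ 5 * Q ^ 3 * Q := by
      gcongr
      exact expect_le hne fun F hF ↦ by exact_mod_cast degree_sup_le_of_mem hF hQ u
    _ = 5 * Q ^ 4 := by ring

lemma card_forwardPairs_le (hF : F ∈ graphsAvoiding r B) (hQ : ∀ x, r x + B.degree x ≤ Q)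
    (u v : V) : #(forwardPairs B F u v) ≤ Q ^ 2 := by
  have hsub : forwardPairs B F u v ⊆
      ({e | F.Adj e.1 e.2 ∧ e.1 ∈ (F ⊔ B).neighborFinset u} : Finset (V × V)) := by
    intro e
    simp only [forwardPairs, mem_filter_univ, mem_neighborFinset]
    tauto
  calc _ ≤ _ := card_le_card hsub
    _ ≤ _ := card_adj_fst_mem_le (degree_le_of_mem hF hQ) _
    _ ≤ Q * Q := Nat.mul_le_mul_right Q (degree_sup_le_of_mem hF hQ u)
    _ = Q ^ 2 := (sq Q).symm

lemma one_le_of_adj (hQ : ∀ x, r x + B.degree x ≤ Q) (huv : B.Adj u v) : 1 ≤ Q :=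
  ((B.degree_pos_iff_exists_adj u).2 ⟨v, huv⟩).trans_le <| (Nat.le_add_left _ _).trans (hQ u)

lemma cast_card_erase {α : Type*} [DecidableEq α] (s : Finset α) (a : α) :
    (#(s.erase a) : ℝ) = #s - if a ∈ s then 1 else 0 := by
  split_ifs with ha
  · rw [cast_card_erase_of_mem ha]
  · rw [erase_eq_of_notMem ha, sub_zero]

lemma cast_sum_mul_pred {s : V → ℕ} :
    ((∑ x, s x * (s x - 1) : ℕ) : ℝ) = ∑ x, (s x : ℝ) * (s x - 1) := by
  push_cast
  refine sum_congr rfl fun x _ ↦ ?_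
  cases s x <;> simp

variable [DecidableEq V]

lemma card_forwardPairs_eq_sum (B F : SimpleGraph V) (huv : u ≠ v) :
    (#(forwardPairs B F u v) : ℝ) = ∑ x ∈ ((F ⊔ B).neighborFinset u).erase v,
      ((F.degree x : ℝ) - (if F.Adj u x then 1 else 0) - (if F.Adj v x then 1 else 0)) := by
  have hcard : #(forwardPairs B F u v) = ∑ x ∈ ((F ⊔ B).neighborFinset u).erase v,
      #(((F.neighborFinset x).erase u).erase v) := by
    rw [card_eq_sum_ones, Finset.sum_finset_product _ (((F ⊔ B).neighborFinset u).erase v)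
      fun x ↦ ((F.neighborFinset x).erase u).erase v]
    · simp
    · rintro ⟨x, y⟩
      have : (F ⊔ B).Adj u x → x ≠ u := fun h ↦ h.ne'
      simp only [forwardPairs, mem_filter_univ, mem_erase, mem_neighborFinset]
      tauto
  push_cast [hcard]
  refine sum_congr rfl fun x _ ↦ ?_
  rw [cast_card_erase, cast_card_erase, card_neighborFinset_eq_degree]
  simp only [mem_erase, mem_neighborFinset, F.adj_comm, huv.symm, ne_eq, not_false_eq_true,
    true_and]

lemma card_forwardPairs_eq (hF : F ∈ graphsAvoiding r B) (huv : B.Adj u v) :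
    (#(forwardPairs B F u v) : ℝ) =
      ∑ x ∈ (B.neighborFinset u).erase v, (r x : ℝ) + ∑ x ∈ F.neighborFinset u, ((r x : ℝ) - 1) -
        #{x ∈ F.neighborFinset v | (F ⊔ B).Adj u x} := by
  obtain ⟨hr, hFB⟩ := mem_graphsAvoiding.1 hF
  rw [SimpleGraph.disjoint_left] at hFB
  have hFv : v ∉ F.neighborFinset u := by simpa using fun h ↦ hFB _ _ h huv
  let S := ((F ⊔ B).neighborFinset u).erase v
  have hS : S = (B.neighborFinset u).erase v ∪ F.neighborFinset u := by
    rw [← erase_eq_of_notMem hFv, ← erase_union_distrib, union_comm, ← neighborFinset_sup]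
  have hSdisj : Disjoint ((B.neighborFinset u).erase v) (F.neighborFinset u) := by
    rw [Finset.disjoint_left]
    intro x hx hx'
    exact hFB u x (by simpa using hx') (by simpa using mem_of_mem_erase hx)
  have hu : ∑ x ∈ S, (if F.Adj u x then 1 else 0 : ℝ) = ∑ x ∈ F.neighborFinset u, 1 := by
    rw [sum_boole, sum_const, nsmul_one]
    congr 2
    ext x
    simp only [hS, mem_filter, mem_union, mem_neighborFinset]
    tauto
  have hv : ∑ x ∈ S, (if F.Adj v x then 1 else 0 : ℝ) =
      #{x ∈ F.neighborFinset v | (F ⊔ B).Adj u x} := by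
    rw [sum_boole]
    congr 2
    ext x
    have : F.Adj v x → x ≠ v := fun h ↦ h.ne'
    simp only [S, mem_filter, mem_erase, mem_neighborFinset]
    tauto
  rw [card_forwardPairs_eq_sum B F huv.ne, sum_sub_distrib, sum_sub_distrib, hu, hv,
    show ((F ⊔ B).neighborFinset u).erase v = _ from hS, sum_union hSdisj, sum_sub_distrib]
  simp only [hr]
  ring

lemma sum_ite_eq_or_eq (huv : u ≠ v) (g : V → ℝ) :
    ∑ x, (if x = u ∨ x = v then g x else 0) = g u + g v := by
  rw [← sum_filter, ← sum_pair huv]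
  congr 1
  ext x
  simp

lemma sum_add_indicator (huv : u ≠ v) {s : V → ℕ}
    (hs : ∀ x, s x = r x + if x = u ∨ x = v then 1 else 0) :
    ((∑ x, s x : ℕ) : ℝ) = (∑ x, r x : ℕ) + 2 := by
  have := sum_ite_eq_or_eq huv (fun _ ↦ 1)
  push_cast
  simp only [hs]
  push_cast
  rw [sum_add_distrib, this]
  norm_num

lemma sum_mul_pred_add_indicator (huv : u ≠ v) {s : V → ℕ}
    (hs : ∀ x, s x = r x + if x = u ∨ x = v then 1 else 0) :
    ((∑ x, s x * (s x - 1) : ℕ) : ℝ) = ∑ x, (r x : ℝ) * (r x - 1) + (2 * r u + 2 * r v) := by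
  rw [cast_sum_mul_pred, ← sum_ite_eq_or_eq huv (fun x ↦ 2 * (r x : ℝ)), ← sum_add_distrib]
  refine sum_congr rfl fun x _ ↦ ?_
  rw [hs]
  split_ifs <;> push_cast <;> ring

theorem expect_card_filter_forwardPairs_le (hne : (graphsAvoiding r B).Nonempty)
    (hQ : ∀ x, r x + B.degree x ≤ Q) (huv : B.Adj u v) {s : V → ℕ}
    (hs : ∀ x, s x = r x + if x = u ∨ x = v then 1 else 0) :
    𝔼 F ∈ graphsAvoiding r B, (#{e ∈ forwardPairs B F u v | (F ⊔ B).Adj v e.2} : ℝ) ≤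
      7 * Q ^ 4 / (∑ x, s x : ℕ) := by
  have hle : 𝔼 F ∈ graphsAvoiding r B,
      (#{e ∈ forwardPairs B F u v | (F ⊔ B).Adj v e.2} : ℝ) ≤ Q ^ 2 :=
    expect_le hne fun F hF ↦ by
      exact_mod_cast (card_filter_le _ _).trans (card_forwardPairs_le hF hQ u v)
  have hR := sum_mul_expect_card_filter_forwardPairs_le hne hQ u v
  have hQ₂ : (Q : ℝ) ^ 2 ≤ Q ^ 4 :=
    pow_le_pow_right₀ (mod_cast one_le_of_adj hQ huv) (by norm_num)
  rw [sum_add_indicator huv.ne hs, le_div_iff₀ (by positivity)]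
  linarith

lemma expect_card_forwardPairs_eq (hne : (graphsAvoiding r B).Nonempty) (huv : B.Adj u v) :
    𝔼 F ∈ graphsAvoiding r B, (#(forwardPairs B F u v) : ℝ) =
      ∑ x ∈ (B.neighborFinset u).erase v, (r x : ℝ) +
        𝔼 F ∈ graphsAvoiding r B, ∑ x ∈ F.neighborFinset u, ((r x : ℝ) - 1) -
        𝔼 F ∈ graphsAvoiding r B, (#{x ∈ F.neighborFinset v | (F ⊔ B).Adj u x} : ℝ) := by
  rw [← expect_const hne (∑ x ∈ (B.neighborFinset u).erase v, (r x : ℝ)),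
    ← expect_add_distrib, ← expect_sub_distrib]
  exact expect_congr rfl fun F hF ↦ card_forwardPairs_eq hF huv

lemma sum_neighborFinset_erase_le (hQ : ∀ x, r x + B.degree x ≤ Q) (u v : V) :
    ∑ x ∈ (B.neighborFinset u).erase v, r x ≤ Q ^ 2 := by
  refine (sum_le_card_nsmul _ _ Q fun x _ ↦ (Nat.le_add_right _ _).trans (hQ x)).trans ?_
  rw [sq]
  exact Nat.mul_le_mul_right Q <| (card_erase_le).trans <| (Nat.le_add_left _ _).trans (hQ u)

lemma abs_expect_card_forwardPairs_sub_sum_le (hne : (graphsAvoiding r B).Nonempty)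
    (hQ : ∀ x, r x + B.degree x ≤ Q) (u v : V) :
    |𝔼 F ∈ graphsAvoiding r B, (#(forwardPairs B F u v) : ℝ) -
      ∑ x ∈ (B.neighborFinset u).erase v, (r x : ℝ)| ≤ Q ^ 2 := by
  have hX₀ : (0 : ℝ) ≤ 𝔼 F ∈ graphsAvoiding r B, (#(forwardPairs B F u v) : ℝ) :=
    expect_nonneg fun _ _ ↦ Nat.cast_nonneg _
  have hX : 𝔼 F ∈ graphsAvoiding r B, (#(forwardPairs B F u v) : ℝ) ≤ Q ^ 2 :=
    expect_le hne fun F hF ↦ mod_cast card_forwardPairs_le hF hQ u v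
  have hb₀ : (0 : ℝ) ≤ ∑ x ∈ (B.neighborFinset u).erase v, (r x : ℝ) :=
    sum_nonneg fun _ _ ↦ Nat.cast_nonneg _
  have hb : ∑ x ∈ (B.neighborFinset u).erase v, (r x : ℝ) ≤ Q ^ 2 :=
    mod_cast sum_neighborFinset_erase_le hQ u v
  exact abs_le.2 ⟨by linarith, by linarith⟩

lemma abs_sum_mul_expect_card_forwardPairs_sub_le (hne : (graphsAvoiding r B).Nonempty)
    (hQ : ∀ x, r x + B.degree x ≤ Q) (huv : B.Adj u v) :
    |(∑ x, r x : ℕ) * (𝔼 F ∈ graphsAvoiding r B, (#(forwardPairs B F u v) : ℝ) -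
      ∑ x ∈ (B.neighborFinset u).erase v, (r x : ℝ)) - r u * ∑ x, (r x : ℝ) * (r x - 1)| ≤
      13 * Q ^ 4 := by
  have hQ₁ : (1 : ℝ) ≤ Q := mod_cast one_le_of_adj hQ huv
  have hw (x : V) : |(r x : ℝ) - 1| ≤ Q := by
    have : (r x : ℝ) ≤ Q := mod_cast (Nat.le_add_right _ _).trans (hQ x)
    exact abs_le.2 ⟨by linarith [(r x).cast_nonneg (α := ℝ)], by linarith⟩
  have hW := abs_le.1 (abs_sum_mul_expect_sum_neighborFinset_sub_le hne hQ u hw)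
  have hY := sum_mul_expect_card_common_neighbors_le hne hQ huv.ne
  have hY₀ : (0 : ℝ) ≤ (∑ x, r x : ℕ) * 𝔼 F ∈ graphsAvoiding r B,
      (#{x ∈ F.neighborFinset v | (F ⊔ B).Adj u x} : ℝ) :=
    mul_nonneg (Nat.cast_nonneg _) (expect_nonneg fun _ _ ↦ Nat.cast_nonneg _)
  have hQ₃ : (Q : ℝ) ^ 3 ≤ Q ^ 4 := pow_le_pow_right₀ hQ₁ (by norm_num)
  rw [expect_card_forwardPairs_eq hne huv, abs_le]
  constructor <;> linarith

theorem abs_expect_card_forwardPairs_sub_le (hne : (graphsAvoiding r B).Nonempty)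
    (hQ : ∀ x, r x + B.degree x ≤ Q) (huv : B.Adj u v) {s : V → ℕ}
    (hs : ∀ x, s x = r x + if x = u ∨ x = v then 1 else 0) :
    |𝔼 F ∈ graphsAvoiding r B, (#(forwardPairs B F u v) : ℝ) -
      (∑ x ∈ (B.neighborFinset u).erase v, (s x : ℝ) +
        (s u - 1) * (∑ x, s x * (s x - 1) : ℕ) / (∑ x, s x : ℕ))| ≤
      19 * Q ^ 4 / (∑ x, s x : ℕ) := by
  have hsB : ∑ x ∈ (B.neighborFinset u).erase v, (s x : ℝ) =
      ∑ x ∈ (B.neighborFinset u).erase v, (r x : ℝ) := by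
    refine sum_congr rfl fun x hx ↦ ?_
    rw [mem_erase, mem_neighborFinset] at hx
    simp [hs, hx.1, hx.2.ne']
  have hsu : (s u : ℝ) - 1 = r u := by simp [hs]
  have hr (x : V) : r x ≤ Q := (Nat.le_add_right _ _).trans (hQ x)
  -- Passing from `r` to `s` adds `2` to `∑ s x` and `2 * r u + 2 * r v` to `∑ s x * (s x - 1)`.
  have hru : (r u : ℝ) * (2 * r u + 2 * r v) ≤ Q * (2 * Q + 2 * Q) := by gcongr <;> apply hr
  have hru₀ : (0 : ℝ) ≤ r u * (2 * r u + 2 * r v) := by positivity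
  have hQ₂ : (Q : ℝ) ^ 2 ≤ Q ^ 4 :=
    pow_le_pow_right₀ (mod_cast one_le_of_adj hQ huv) (by norm_num)
  have hX := abs_le.1 (abs_expect_card_forwardPairs_sub_sum_le hne hQ u v)
  have hRX := abs_le.1 (abs_sum_mul_expect_card_forwardPairs_sub_le hne hQ huv)
  have hR : (0 : ℝ) < (∑ x, r x : ℕ) + 2 := by positivity
  rw [sum_add_indicator huv.ne hs, sum_mul_pred_add_indicator huv.ne hs, hsu, hsB, ← sub_sub,
    sub_div' hR.ne', abs_div, abs_of_pos hR]
  refine div_le_div_of_nonneg_right (abs_le.2 ⟨?_, ?_⟩) hR.le <;> linarith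

end Counting

section PlusGraphs

open SimpleGraph
open scoped BigOperators Finset

attribute [local instance] Classical.propDecidable

variable {n Q : ℕ} {d dt : Fin n → ℕ} {H₁ H₂ F G : SimpleGraph (Fin n)} {u v : Fin n}

lemma deg_eq_degree (G : SimpleGraph (Fin n)) (x : Fin n) [Fintype (G.neighborSet x)] :
    deg G x = G.degree x := by
  rw [deg, Set.ncard_eq_toFinset_card', ← card_neighborFinset_eq_degree]
  rfl

lemma deg_sup_of_disjoint (h : Disjoint G F) (x : Fin n) :
    deg (G ⊔ F) x = deg G x + deg F x := by
  simpa only [deg_eq_degree] using degree_sup_of_disjoint h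

lemma deg_sup_le (G F : SimpleGraph (Fin n)) (x : Fin n) :
    deg (G ⊔ F) x ≤ deg G x + deg F x := by
  simpa only [deg_eq_degree] using degree_sup_le

lemma deg_sdiff_add_deg (h : F ≤ G) (x : Fin n) : deg (G \ F) x + deg F x = deg G x := by
  simpa only [deg_eq_degree] using degree_sdiff_add_degree h

lemma deg_edge (huv : u ≠ v) (x : Fin n) :
    deg (edge u v) x = if x = u ∨ x = v then 1 else 0 := by
  rw [deg_eq_degree, degree_edge huv]

lemma deg_le_maxDeg (G : SimpleGraph (Fin n)) (x : Fin n) : deg G x ≤ maxDeg G :=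
  Finset.le_sup (Finset.mem_univ x)

lemma expect_eq_finset_expect (base : SimpleGraph (Fin n) → Prop)
    (X : SimpleGraph (Fin n) → ℝ) : expect base X = 𝔼 G with base G, X G := by
  rw [expect, Finset.expect_eq_sum_div_card, Nat.card_eq_fintype_card, Fintype.card_subtype,
    ← finsum_mem_coe_finset]
  simp

lemma mem_graphsAvoiding_iff_deg {r : Fin n → ℕ} {B : SimpleGraph (Fin n)} :
    F ∈ graphsAvoiding r B ↔ (∀ x, deg F x = r x) ∧ Disjoint F B := by
  simp only [mem_graphsAvoiding, deg_eq_degree]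

lemma expect_deg_eq_and_le_and_disjoint {L H : SimpleGraph (Fin n)} {r : Fin n → ℕ}
    (hLH : Disjoint L H) (hd : ∀ x, d x = r x + deg L x) (X : SimpleGraph (Fin n) → ℝ) :
    𝔼 G with (∀ x, deg G x = d x) ∧ L ≤ G ∧ Disjoint G H, X G =
      𝔼 F ∈ graphsAvoiding r (L ⊔ H), X (F ⊔ L) := by
  refine Finset.expect_nbij' (· \ L) (· ⊔ L) ?_ ?_ ?_ ?_ ?_ <;>
    simp only [Finset.mem_filter_univ, mem_graphsAvoiding_iff_deg, disjoint_sup_right]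
  · rintro G ⟨hG, hLG, hGH⟩
    refine ⟨fun x ↦ ?_, disjoint_sdiff_self_left, hGH.mono_left sdiff_le⟩
    refine Nat.add_right_cancel (m := deg L x) ?_
    rw [← hd, ← hG, deg_sdiff_add_deg hLG]
  · rintro F ⟨hF, hFL, hFH⟩
    refine ⟨fun x ↦ ?_, le_sup_right, hFH.sup_left hLH⟩
    rw [hd, ← hF, deg_sup_of_disjoint hFL]
  · exact fun G hG ↦ sdiff_sup_cancel hG.2.1
  · exact fun F hF ↦ hF.2.1.sup_sdiff_cancel_right
  · exact fun G hG ↦ by rw [sdiff_sup_cancel hG.2.1]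

/-- `𝒢⁺`: the graphs with degree sequence `d` that contain `H₁` and the edge `uv` and contain no
edge of `H₂`. -/
def IsPlusGraph (d : Fin n → ℕ) (H₁ H₂ : SimpleGraph (Fin n)) (u v : Fin n)
    (G : SimpleGraph (Fin n)) : Prop :=
  (∀ i, deg G i = d i) ∧ H₁ ≤ G ∧ G.Adj u v ∧ Disjoint G.edgeSet H₂.edgeSet

/-- The graph `H₁ ∪ {uv} ∪ H₂`, which is disjoint from `G \ (H₁ ∪ {uv})` for `G` in `𝒢⁺`. -/
def forbidden (H₁ H₂ : SimpleGraph (Fin n)) (u v : Fin n) : SimpleGraph (Fin n) :=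
  H₁ ⊔ edge u v ⊔ H₂

lemma adj_forbidden (huv : u ≠ v) : (forbidden H₁ H₂ u v).Adj u v := by
  simp [forbidden, edge_adj, huv]

lemma isPlusGraph_comm : IsPlusGraph d H₁ H₂ u v = IsPlusGraph d H₁ H₂ v u := by
  ext G
  simp only [IsPlusGraph, G.adj_comm]

lemma isPlusGraph_iff (huv : u ≠ v) : IsPlusGraph d H₁ H₂ u v G ↔
    (∀ x, deg G x = d x) ∧ H₁ ⊔ edge u v ≤ G ∧ Disjoint G H₂ := by
  simp only [IsPlusGraph, sup_le_iff, edge_le_iff, huv, false_or,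
    disjoint_edgeSet, and_assoc]

lemma exists_expect_isPlusGraph_eq (hne : ∃ G, IsPlusGraph d H₁ H₂ u v G) (huv : u ≠ v)
    (huv₁ : ¬ H₁.Adj u v) (hdt : ∀ i, dt i = d i - deg H₁ i) (hQ : ∀ i, d i + deg H₂ i ≤ Q) :
    ∃ r : Fin n → ℕ, (graphsAvoiding r (forbidden H₁ H₂ u v)).Nonempty ∧
      (∀ x, dt x = r x + if x = u ∨ x = v then 1 else 0) ∧
      (∀ x, r x + (forbidden H₁ H₂ u v).degree x ≤ Q) ∧
      ∀ X, expect (IsPlusGraph d H₁ H₂ u v) X =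
        𝔼 F ∈ graphsAvoiding r (forbidden H₁ H₂ u v), X (F ⊔ (H₁ ⊔ edge u v)) := by
  obtain ⟨G, hG⟩ := hne
  obtain ⟨hGd, hLG, hGH⟩ := (isPlusGraph_iff huv).1 hG
  let L := H₁ ⊔ edge u v
  have hd (x : Fin n) : d x = deg (G \ L) x + deg L x := by
    rw [← hGd, deg_sdiff_add_deg hLG]
  have hL (x : Fin n) : deg L x = deg H₁ x + if x = u ∨ x = v then 1 else 0 := by
    rw [deg_sup_of_disjoint ((disjoint_edge _).2 huv₁), deg_edge huv]
  refine ⟨deg (G \ L), ⟨G \ L, mem_graphsAvoiding_iff_deg.2 ⟨fun _ ↦ rfl, ?_⟩⟩, fun x ↦ ?_,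
    fun x ↦ ?_, fun X ↦ ?_⟩
  · exact disjoint_sdiff_self_left.sup_right (hGH.mono_left sdiff_le)
  · rw [hdt, hd, hL]
    omega
  · calc _ ≤ deg (G \ L) x + (deg L x + deg H₂ x) := by
          rw [← deg_eq_degree]
          exact Nat.add_le_add_left (deg_sup_le L H₂ x) _
      _ ≤ Q := by rw [← add_assoc, ← hd]; exact hQ x
  · rw [expect_eq_finset_expect]
    simp only [isPlusGraph_iff huv]
    exact expect_deg_eq_and_le_and_disjoint (hGH.mono_left hLG) hd X

lemma Xu_sup_eq_card_forwardPairs (hF : Disjoint F (forbidden H₁ H₂ u v)) :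
    Xu H₁ H₂ u v (F ⊔ (H₁ ⊔ edge u v)) = #(forwardPairs (forbidden H₁ H₂ u v) F u v) := by
  rw [Xu, Nat.card_eq_fintype_card, Fintype.card_subtype, forwardPairs]
  congr 1
  ext ⟨x, y⟩
  have hFH := SimpleGraph.disjoint_left.1 hF x y
  simp only [forbidden, Finset.mem_filter_univ, sup_adj, edge_adj] at hFH ⊢
  grind

lemma Xuv_sup_eq_card_filter_forwardPairs (hF : Disjoint F (forbidden H₁ H₂ u v)) :
    Xuv H₁ H₂ u v (F ⊔ (H₁ ⊔ edge u v)) =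
      #{e ∈ forwardPairs (forbidden H₁ H₂ u v) F u v | (F ⊔ (forbidden H₁ H₂ u v)).Adj v e.2} := by
  rw [Xuv, Nat.card_eq_fintype_card, Fintype.card_subtype, forwardPairs, Finset.filter_filter]
  congr 1
  ext ⟨x, y⟩
  have hFH := SimpleGraph.disjoint_left.1 hF x y
  simp only [forbidden, Finset.mem_filter_univ, sup_adj, edge_adj] at hFH ⊢
  grind

lemma Xv_eq_Xu_swap (H₁ H₂ : SimpleGraph (Fin n)) (u v : Fin n) :
    Xv H₁ H₂ u v = Xu H₁ H₂ v u := by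
  ext G
  refine Nat.card_congr <| (Equiv.prodComm _ _).subtypeEquiv fun e ↦ ?_
  simp only [Equiv.prodComm_apply, Prod.fst_swap, Prod.snd_swap, G.adj_comm e.1, H₁.adj_comm e.1]
  tauto

lemma finsum_neighborSet_eq (huv : ¬ (H₁ ⊔ H₂).Adj u v) (w : Fin n → ℝ) :
    ∑ᶠ x ∈ (H₁ ⊔ H₂).neighborSet u, w x =
      ∑ x ∈ ((forbidden H₁ H₂ u v).neighborFinset u).erase v, w x := by
  have hN : (H₁ ⊔ H₂).neighborSet u = ((forbidden H₁ H₂ u v).neighborFinset u).erase v := by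
    ext x
    rw [Finset.coe_erase, coe_neighborFinset]
    simp only [forbidden, Set.mem_sdiff, mem_neighborSet, sup_adj, edge_adj,
      Set.mem_singleton_iff] at huv ⊢
    grind
  rw [hN, finsum_mem_coe_finset]

theorem expect_Xuv_le (hne : ∃ G, IsPlusGraph d H₁ H₂ u v G) (huv : u ≠ v)
    (huv₁ : ¬ H₁.Adj u v) (hdt : ∀ i, dt i = d i - deg H₁ i) (hQ : ∀ i, d i + deg H₂ i ≤ Q) :
    expect (IsPlusGraph d H₁ H₂ u v) (fun G ↦ Xuv H₁ H₂ u v G) ≤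
      7 * Q ^ 4 / (∑ i, dt i : ℕ) := by
  obtain ⟨r, hr, hdtr, hrQ, hexpect⟩ := exists_expect_isPlusGraph_eq hne huv huv₁ hdt hQ
  rw [hexpect, Finset.expect_congr rfl fun F hF ↦
    congrArg Nat.cast (Xuv_sup_eq_card_filter_forwardPairs (mem_graphsAvoiding.1 hF).2)]
  exact expect_card_filter_forwardPairs_le hr hrQ (adj_forbidden huv) hdtr

theorem abs_expect_Xu_sub_le (hne : ∃ G, IsPlusGraph d H₁ H₂ u v G) (huv : u ≠ v)
    (huv₁₂ : ¬ (H₁ ⊔ H₂).Adj u v) (hdt : ∀ i, dt i = d i - deg H₁ i)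
    (hQ : ∀ i, d i + deg H₂ i ≤ Q) :
    |expect (IsPlusGraph d H₁ H₂ u v) (fun G ↦ Xu H₁ H₂ u v G) -
      (∑ᶠ x ∈ (H₁ ⊔ H₂).neighborSet u, (dt x : ℝ) +
        (dt u - 1) * (∑ i, dt i * (dt i - 1) : ℕ) / (∑ i, dt i : ℕ))| ≤
      19 * Q ^ 4 / (∑ i, dt i : ℕ) := by
  obtain ⟨r, hr, hdtr, hrQ, hexpect⟩ :=
    exists_expect_isPlusGraph_eq hne huv (fun h ↦ huv₁₂ (.inl h)) hdt hQ
  rw [hexpect, finsum_neighborSet_eq huv₁₂, Finset.expect_congr rfl fun F hF ↦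
    congrArg Nat.cast (Xu_sup_eq_card_forwardPairs (mem_graphsAvoiding.1 hF).2)]
  exact abs_expect_card_forwardPairs_sub_le hr hrQ (adj_forbidden huv) hdtr

theorem abs_expect_Xv_sub_le (hne : ∃ G, IsPlusGraph d H₁ H₂ u v G) (huv : u ≠ v)
    (huv₁₂ : ¬ (H₁ ⊔ H₂).Adj u v) (hdt : ∀ i, dt i = d i - deg H₁ i)
    (hQ : ∀ i, d i + deg H₂ i ≤ Q) :
    |expect (IsPlusGraph d H₁ H₂ u v) (fun G ↦ Xv H₁ H₂ u v G) -
      (∑ᶠ y ∈ (H₁ ⊔ H₂).neighborSet v, (dt y : ℝ) +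
        (dt v - 1) * (∑ i, dt i * (dt i - 1) : ℕ) / (∑ i, dt i : ℕ))| ≤
      19 * Q ^ 4 / (∑ i, dt i : ℕ) := by
  rw [Xv_eq_Xu_swap]
  rw [isPlusGraph_comm] at hne ⊢
  exact abs_expect_Xu_sub_le hne huv.symm (mt Adj.symm huv₁₂) hdt hQ

end PlusGraphs

lemma mul_pow_four_div_le {K c Q D M Mt : ℝ} (hc : 0 < c) (hQ₀ : 0 ≤ Q) (hQ : Q ≤ (K + 1) * D)
    (hMt : 0 ≤ Mt) (hMtM : Mt ≤ M) (hM : c * M ≤ Mt) :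
    19 * Q ^ 4 / Mt ≤ 19 * (K + 1) ^ 4 / c * D ^ 4 / M := by
  rcases hMt.eq_or_lt with rfl | hMt
  · rw [div_zero]
    positivity
  have : 0 < M := hMt.trans_le hMtM
  calc _ ≤ 19 * ((K + 1) * D) ^ 4 / (c * M) := by gcongr
    _ = 19 * (K + 1) ^ 4 / c * D ^ 4 / M := by field_simp

theorem stmt15_general {K c : ℝ} (hc : 0 < c) {n : ℕ} {d : Fin n → ℕ} {M Δ : ℕ}
    (hM : M = ∑ i, d i) (hΔ : Δ = Finset.univ.sup d) {H₁ H₂ : SimpleGraph (Fin n)}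
    (hH₂ : (maxDeg H₂ : ℝ) ≤ K * Δ) {dt : Fin n → ℕ} (hdt : ∀ i, dt i = d i - deg H₁ i)
    {Mt Mt2 : ℕ} (hMt : Mt = ∑ i, dt i) (hMt2 : Mt2 = ∑ i, dt i * (dt i - 1))
    (hcM : c * M ≤ Mt) {u v : Fin n} (huv : u ≠ v) (huv₁₂ : ¬ (H₁ ⊔ H₂).Adj u v)
    (hne : ∃ G, IsPlusGraph d H₁ H₂ u v G) :
    |expect (IsPlusGraph d H₁ H₂ u v) (fun G ↦ Xuv H₁ H₂ u v G)| ≤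
      19 * (K + 1) ^ 4 / c * Δ ^ 4 / M ∧
    |expect (IsPlusGraph d H₁ H₂ u v) (fun G ↦ Xu H₁ H₂ u v G) -
      (∑ᶠ x ∈ (H₁ ⊔ H₂).neighborSet u, (dt x : ℝ) + (dt u - 1) * Mt2 / Mt)| ≤
      19 * (K + 1) ^ 4 / c * Δ ^ 4 / M ∧
    |expect (IsPlusGraph d H₁ H₂ u v) (fun G ↦ Xv H₁ H₂ u v G) -
      (∑ᶠ y ∈ (H₁ ⊔ H₂).neighborSet v, (dt y : ℝ) + (dt v - 1) * Mt2 / Mt)| ≤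
      19 * (K + 1) ^ 4 / c * Δ ^ 4 / M := by
  have hQ (i : Fin n) : d i + deg H₂ i ≤ Δ + maxDeg H₂ :=
    Nat.add_le_add (hΔ ▸ Finset.le_sup (Finset.mem_univ i)) (deg_le_maxDeg H₂ i)
  have hbound : 19 * ((Δ + maxDeg H₂ : ℕ) : ℝ) ^ 4 / Mt ≤ 19 * (K + 1) ^ 4 / c * Δ ^ 4 / M := by
    refine mul_pow_four_div_le hc (Nat.cast_nonneg _) ?_ (Nat.cast_nonneg _) ?_ hcM
    · push_cast
      linarith
    · rw [hMt, hM]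
      exact_mod_cast Finset.sum_le_sum fun i _ ↦ (hdt i).trans_le (Nat.sub_le _ _)
  have hXuv₀ : 0 ≤ expect (IsPlusGraph d H₁ H₂ u v) (fun G ↦ Xuv H₁ H₂ u v G) :=
    div_nonneg (finsum_nonneg fun _ ↦ finsum_nonneg fun _ ↦ Nat.cast_nonneg _) (Nat.cast_nonneg _)
  have hXuv := expect_Xuv_le hne huv (fun h ↦ huv₁₂ (.inl h)) hdt hQ
  have hXu := abs_expect_Xu_sub_le hne huv huv₁₂ hdt hQ
  have hXv := abs_expect_Xv_sub_le hne huv huv₁₂ hdt hQ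
  rw [← hMt, ← hMt2] at hXu hXv
  rw [← hMt] at hXuv
  refine ⟨?_, hXu.trans hbound, hXv.trans hbound⟩
  rw [abs_of_nonneg hXuv₀]
  refine hXuv.trans (le_trans ?_ hbound)
  gcongr
  norm_num

/-- Estimates on the expected numbers of forward switchings. -/
theorem stmt15 (K c : ℝ) (hK : 1 ≤ K) (hc : 0 < c) :
    ∃ C δ : ℝ, 0 < C ∧ 0 < δ ∧
      ∀ (n : ℕ) (d : Fin n → ℕ) (M Δ : ℕ),
        M = ∑ i, d i → Δ = Finset.univ.sup d →
        Even M → (Δ : ℝ) ^ 2 ≤ δ * M →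
        ∀ H₁ H₂ : SimpleGraph (Fin n),
        Disjoint H₁.edgeSet H₂.edgeSet →
        (∀ i, deg H₁ i ≤ d i) →
        (maxDeg H₂ : ℝ) ≤ K * Δ →
        ∀ dt : Fin n → ℕ, (∀ i, dt i = d i - deg H₁ i) →
        ∀ Mt Mt2 : ℕ, Mt = ∑ i, dt i → Mt2 = ∑ i, dt i * (dt i - 1) →
        c * M ≤ (Mt : ℝ) →
        ∀ u v : Fin n, u ≠ v → ¬ (H₁ ⊔ H₂).Adj u v →
        ∀ basePlus : SimpleGraph (Fin n) → Prop,
        basePlus = (fun G => (∀ i, deg G i = d i) ∧ H₁ ≤ G ∧ G.Adj u v ∧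
          Disjoint G.edgeSet H₂.edgeSet) →
        (∃ G, basePlus G) →
        |expect basePlus (fun G => (Xuv H₁ H₂ u v G : ℝ))| ≤ C * (Δ : ℝ) ^ 4 / M ∧
        |expect basePlus (fun G => (Xu H₁ H₂ u v G : ℝ))
            - ((∑ᶠ x ∈ (H₁ ⊔ H₂).neighborSet u, (dt x : ℝ))
              + ((dt u : ℝ) - 1) * (Mt2 : ℝ) / (Mt : ℝ))| ≤ C * (Δ : ℝ) ^ 4 / M ∧
        |expect basePlus (fun G => (Xv H₁ H₂ u v G : ℝ))
            - ((∑ᶠ y ∈ (H₁ ⊔ H₂).neighborSet v, (dt y : ℝ))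
              + ((dt v : ℝ) - 1) * (Mt2 : ℝ) / (Mt : ℝ))| ≤ C * (Δ : ℝ) ^ 4 / M := by
  refine ⟨19 * (K + 1) ^ 4 / c, 1, by positivity, one_pos, ?_⟩
  rintro n d M Δ hM hΔ - - H₁ H₂ - - hH₂ dt hdt Mt Mt2 hMt hMt2 hcM u v huv huv₁₂ _ rfl hne
  exact stmt15_general hc hM hΔ hH₂ hdt hMt hMt2 hcM huv huv₁₂ hne
end
end

section
/- For every constant c > 0 the following holds. Let d = d(n) be a sequence of positive integers with d(n) → ∞ and d(n)/√n → 0. For each n let 𝒯(n) be the set of triangles in K_n. For an ordered k-tuple (T₁,…,T_k) of triangles and a vertex v ∈ [n], let h(v) be the number of indices i such that v is incident to an edge of T_i, and let h_j = |{v : h(v) = j}|. Let ℱ₁(k) be the set of k-tuples of pairwise distinct, pairwise edge-disjoint triangles, and let ℬ(k) be the set of k-tuples of triangles with h_j > 0 for some j ≥ 4 or h_j ≥ d²/√n for some j ∈ {2,3}. Then, uniformly over integers 1 ≤ k ≤ c·d^{3/2}: |ℱ₁(k) \ ℬ(k)| / ((n)₃/6)^k → 1 and |ℱ₁(k) ∩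 ℬ(k)| / ((n)₃/6)^k → 0 as n → ∞; that is, sup over 1 ≤ k ≤ c·d^{3/2} of ||ℱ₁(k)\ℬ(k)|/((n)₃/6)^k − 1| and of |ℱ₁(k)∩ℬ(k)|/((n)₃/6)^k both tend to 0. -/
open Filter

noncomputable section

/-- `h(v)`: the number of indices `i` such that the vertex `v` is incident to an edge of the
triangle `T i` (equivalently, `v` lies in the vertex set `T i`). -/
def hitCount {n k : ℕ} (T : Fin k → Finset (Fin n)) (v : Fin n) : ℕ :=
  Nat.card {i : Fin k // v ∈ T i}

/-- `h_j`: the number of vertices `v` with `h(v) = j`. -/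
def levelCount {n k : ℕ} (T : Fin k → Finset (Fin n)) (j : ℕ) : ℕ :=
  Nat.card {v : Fin n // hitCount T v = j}

/-- `ℱ₁(k)`: tuples of pairwise distinct, pairwise edge-disjoint triangles (triangles are
recorded by their 3-element vertex sets; sharing an edge means sharing two vertices). -/
def F1 (n k : ℕ) : Set (Fin k → Finset (Fin n)) :=
  {T | (∀ i, (T i).card = 3) ∧ Function.Injective T ∧
    ∀ i j, i ≠ j → (T i ∩ T j).card ≤ 1}

/-- `ℬ(k)`: tuples of triangles with `h_j > 0` for some `j ≥ 4`, or `h_j ≥ d²/√n` for some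
`j ∈ {2,3}`. -/
def B (n dv k : ℕ) : Set (Fin k → Finset (Fin n)) :=
  {T | (∀ i, (T i).card = 3) ∧
    ((∃ j, 4 ≤ j ∧ 0 < levelCount T j) ∨
      (∃ j, (j = 2 ∨ j = 3) ∧ (dv : ℝ) ^ 2 / Real.sqrt n ≤ (levelCount T j : ℝ)))}

/-!
A first-moment argument. Draw `T₁, …, T_k` uniformly and independently from the triangles of `K_n`.
A tuple outside `ℱ₁ \ ℬ` has two triangles on a common pair of vertices, or a vertex on four
triangles, or at least `d²/√n` vertices on at least two triangles. Hence it contributes at least `1`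
to the sum of the numbers of such pairs and quadruples of triangles, and of `√n/d²` times the number
of pairs of triangles through a common vertex. The three expectations are of order `k²/n²`, `k⁴/n³`
and `k²/(n · d²/√n)`, and with `k ≤ c d^{3/2}` all of them are `O(d/√n)`.
-/

section FirstMoment

open Finset BigOperators

lemma card_filter_div_card_le_expect {α : Type*} {s : Finset α} {p : α → Prop} [DecidablePred p]
    {f : α → ℝ} (hf : ∀ a ∈ s, 0 ≤ f a) (hp : ∀ a ∈ s, p a → 1 ≤ f a) :
    (#{a ∈ s | p a} : ℝ) / #s ≤ 𝔼 a ∈ s, f a := by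
  rw [expect_eq_sum_div_card, ← sum_boole]
  gcongr with a ha
  split_ifs with h
  exacts [hp a ha h, hf a ha]

lemma abs_card_filter_div_card_sub_one {α : Type*} {s : Finset α} (hs : s.Nonempty) (p : α → Prop)
    [DecidablePred p] : |(#{a ∈ s | p a} : ℝ) / #s - 1| = #{a ∈ s | ¬ p a} / #s := by
  have hpos : (0 : ℝ) < #s := by exact_mod_cast hs.card_pos
  have hsplit : (#{a ∈ s | p a} : ℝ) + #{a ∈ s | ¬ p a} = #s := by
    exact_mod_cast card_filter_add_card_filter_not p
  rw [div_sub_one hpos.ne', ← hsplit, sub_add_cancel_left, abs_div, abs_neg, hsplit,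
    Nat.abs_cast, Nat.abs_cast]

end FirstMoment

section FactorialMoment

open Finset BigOperators

variable {ι α : Type*} [Fintype ι] [DecidableEq ι]

lemma card_filter_forall_mem_piFinset_const (S : Finset α) (p : α → Prop) [DecidablePred p]
    (I : Finset ι) :
    #{T ∈ Fintype.piFinset fun _ : ι => S | ∀ i ∈ I, p (T i)}
      = #{s ∈ S | p s} ^ #I * #S ^ (Fintype.card ι - #I) := by
  have h : {T ∈ Fintype.piFinset fun _ : ι => S | ∀ i ∈ I, p (T i)}
      = Fintype.piFinset fun i => if i ∈ I then {s ∈ S | p s} else S := by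
    ext T
    simp only [mem_filter, Fintype.mem_piFinset, ← forall_and]
    refine forall_congr' fun i => ?_
    by_cases hi : i ∈ I <;> simp [hi]
  rw [h, Fintype.card_piFinset]
  simp only [apply_ite Finset.card, prod_ite, prod_const, filter_mem_eq_inter, univ_inter,
    filter_notMem_eq_sdiff, card_univ_sdiff]

lemma sum_choose_card_filter_piFinset_const (S : Finset α) (p : α → Prop) [DecidablePred p]
    (m : ℕ) :
    ∑ T ∈ Fintype.piFinset fun _ : ι => S, (#{i | p (T i)}).choose m
      = (Fintype.card ι).choose m * (#{s ∈ S | p s} ^ m * #S ^ (Fintype.card ι - m)) := by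
  have hchoose (T : ι → α) : (#{i | p (T i)}).choose m
      = #{I ∈ powersetCard m univ | ∀ i ∈ I, p (T i)} := by
    rw [← card_powersetCard]
    congr 1
    ext I
    simp only [mem_powersetCard, mem_filter, subset_iff, mem_univ, true_and, implies_true]
    tauto
  calc ∑ T ∈ Fintype.piFinset fun _ : ι => S, (#{i | p (T i)}).choose m
      = ∑ I ∈ powersetCard m univ, #{T ∈ Fintype.piFinset fun _ : ι => S | ∀ i ∈ I, p (T i)} := by
        simp only [hchoose]
        simpa only [card_filter] using sum_comm
    _ = ∑ _I ∈ powersetCard m (univ : Finset ι),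
          #{s ∈ S | p s} ^ m * #S ^ (Fintype.card ι - m) :=
        sum_congr rfl fun _ hI => by
          rw [card_filter_forall_mem_piFinset_const, mem_powersetCard_univ.1 hI]
    _ = (Fintype.card ι).choose m * (#{s ∈ S | p s} ^ m * #S ^ (Fintype.card ι - m)) := by
        rw [sum_const, card_powersetCard, card_univ, smul_eq_mul]

lemma expect_choose_card_filter_piFinset_const {S : Finset α} (hS : S.Nonempty) (p : α → Prop)
    [DecidablePred p] (m : ℕ) :
    𝔼 T ∈ Fintype.piFinset fun _ : ι => S, ((#{i | p (T i)}).choose m : ℝ)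
      = (Fintype.card ι).choose m * (#{s ∈ S | p s} / #S : ℝ) ^ m := by
  rw [expect_eq_sum_div_card, ← Nat.cast_sum, sum_choose_card_filter_piFinset_const,
    Fintype.card_piFinset, prod_const, card_univ]
  rcases lt_or_ge (Fintype.card ι) m with hm | hm
  · simp [Nat.choose_eq_zero_of_lt hm]
  · obtain ⟨l, hl⟩ := Nat.exists_eq_add_of_le hm
    rw [hl, Nat.add_sub_cancel_left, pow_add, div_pow]
    push_cast
    field_simp

end FactorialMoment

section Overlap

open Finset BigOperators

variable {ι V : Type*} [Fintype ι] [Fintype V] [DecidableEq V]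

/-- The number of pairs `(U, I)` of a `u`-set `U` of vertices and an `m`-set `I` of indices such
that `U ⊆ T i` for all `i ∈ I`. For triangles `T i`, taking `u = 1` counts coincidences at vertices
and `u = 2` coincidences at edges. -/
def overlapCount (T : ι → Finset V) (u m : ℕ) : ℕ :=
  ∑ U ∈ powersetCard u univ, (#{i | U ⊆ T i}).choose m

variable (ι V) in
/-- The `ι`-indexed families of `r`-element subsets of `V`; for `r = 3` these are the tuples of
triangles of the complete graph on `V`, encoded as in `F1` and `B`. -/
def powersetCardTuples [DecidableEq ι] (r : ℕ) : Finset (ι → Finset V) :=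
  Fintype.piFinset fun _ => powersetCard r univ

lemma card_filter_powersetCard_subset_div_choose {r : ℕ} (hr : r ≤ Fintype.card V) (U : Finset V) :
    (#{s ∈ powersetCard r (univ : Finset V) | U ⊆ s} : ℝ) / (Fintype.card V).choose r
      = r.choose #U / (Fintype.card V).choose #U := by
  have hpos (m : ℕ) (hm : m ≤ Fintype.card V) : ((Fintype.card V).choose m : ℝ) ≠ 0 := by
    exact_mod_cast (Nat.choose_pos hm).ne'
  rw [div_eq_div_iff (hpos r hr) (hpos #U (card_le_univ U))]
  norm_cast
  rcases lt_or_ge r #U with hU | hU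
  · have hempty : {s ∈ powersetCard r (univ : Finset V) | U ⊆ s} = ∅ :=
      filter_eq_empty_iff.2 fun s hs hUs =>
        hU.not_ge ((mem_powersetCard_univ.1 hs) ▸ card_le_card hUs)
    simp [hempty, Nat.choose_eq_zero_of_lt hU]
  · rw [card_filter_powersetCard_subset U univ r (subset_univ U) hU, card_univ, mul_comm,
      ← Nat.choose_mul hU, mul_comm]

lemma expect_overlapCount [DecidableEq ι] {r : ℕ} (hr : r ≤ Fintype.card V) (u m : ℕ) :
    𝔼 T ∈ powersetCardTuples ι V r, (overlapCount T u m : ℝ)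
      = (Fintype.card V).choose u * ((Fintype.card ι).choose m
          * (r.choose u / (Fintype.card V).choose u : ℝ) ^ m) := by
  have hne : (powersetCard r (univ : Finset V)).Nonempty := powersetCard_nonempty.2 hr
  have hterm (U : Finset V) (hU : U ∈ powersetCard u univ) :
      𝔼 T ∈ powersetCardTuples ι V r, ((#{i | U ⊆ T i}).choose m : ℝ)
        = (Fintype.card ι).choose m * (r.choose u / (Fintype.card V).choose u : ℝ) ^ m := by
    rw [powersetCardTuples, expect_choose_card_filter_piFinset_const hne, card_powersetCard,
      card_univ, card_filter_powersetCard_subset_div_choose hr, mem_powersetCard_univ.1 hU]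
  simp only [overlapCount, Nat.cast_sum]
  rw [expect_sum_comm, sum_congr rfl hterm, sum_const, card_powersetCard, card_univ, nsmul_eq_mul]

end Overlap

lemma pow_le_pow_mul_rpow_mul {a b c p : ℝ} (ha : 0 ≤ a) (hb : 0 ≤ b) (h : a ≤ c * b ^ p)
    (m : ℕ) : a ^ m ≤ c ^ m * b ^ (p * m) := by
  rw [Real.rpow_mul_natCast hb, ← mul_pow]
  gcongr

section Triangles

open Finset BigOperators

variable {n k : ℕ}

lemma mem_powersetCardTuples_of_mem_F1 {T : Fin k → Finset (Fin n)} (hT : T ∈ F1 n k) :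
    T ∈ powersetCardTuples (Fin k) (Fin n) 3 := by
  simpa [powersetCardTuples] using hT.1

lemma card_powersetCardTuples_three (n k : ℕ) :
    (#(powersetCardTuples (Fin k) (Fin n) 3) : ℝ) = ((n.descFactorial 3 : ℝ) / 6) ^ k := by
  have hchoose : (n.descFactorial 3 : ℝ) / 6 = n.choose 3 := by
    rw [Nat.descFactorial_eq_factorial_mul_choose]
    simp [Nat.factorial]
  rw [hchoose]
  simp [powersetCardTuples]

lemma levelCount_le_overlapCount {m j : ℕ} (hmj : m ≤ j) (T : Fin k → Finset (Fin n)) :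
    levelCount T j ≤ overlapCount T 1 m := by
  have hoverlap : overlapCount T 1 m = ∑ v, (hitCount T v).choose m := by
    simp [overlapCount, powersetCard_one, hitCount, Fintype.card_subtype]
  rw [levelCount, Nat.card_eq_fintype_card, Fintype.card_subtype, card_filter, hoverlap]
  refine sum_le_sum fun v _ => ?_
  split_ifs with h
  · exact Nat.choose_pos (h ▸ hmj)
  · exact Nat.zero_le _

lemma overlapCount_two_two_pos {T : Fin k → Finset (Fin n)} (hT : ∀ i, #(T i) = 3)
    (hF : T ∉ F1 n k) : 0 < overlapCount T 2 2 := by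
  obtain ⟨i, j, hij, hinter⟩ : ∃ i j, i ≠ j ∧ 2 ≤ #(T i ∩ T j) := by
    by_contra! h
    refine hF ⟨hT, fun i j hij => ?_, fun i j hne => Nat.le_of_lt_succ (h i j hne)⟩
    by_contra hne
    have := h i j hne
    rw [hij, inter_self, hT j] at this
    omega
  obtain ⟨U, hU, hUcard⟩ := exists_subset_card_eq hinter
  refine sum_pos_iff.2 ⟨U, mem_powersetCard_univ.2 hUcard, Nat.choose_pos ?_⟩
  exact one_lt_card.2 ⟨i, by simpa using hU.trans inter_subset_left,
    j, by simpa using hU.trans inter_subset_right, hij⟩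

/-- The weight whose mean bounds the proportion of tuples outside `F1 n k \ B n d k`: pairs of
triangles on a common edge, quadruples at a common vertex, and pairs at a common vertex, the last
divided by the threshold `d²/√n` of `B n d k`. -/
def badWeight (d : ℕ) (T : Fin k → Finset (Fin n)) : ℝ :=
  overlapCount T 2 2 + overlapCount T 1 4 + overlapCount T 1 2 / ((d : ℝ) ^ 2 / √n)

lemma badWeight_nonneg (d : ℕ) (T : Fin k → Finset (Fin n)) : 0 ≤ badWeight d T := by
  unfold badWeight
  positivity

lemma one_le_badWeight {d : ℕ} (hn : 0 < n) (hd : 0 < d) {T : Fin k → Finset (Fin n)}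
    (hT : ∀ i, #(T i) = 3) (hbad : T ∉ F1 n k \ B n d k) : 1 ≤ badWeight d T := by
  have hpair : (0 : ℝ) ≤ overlapCount T 1 2 / ((d : ℝ) ^ 2 / √n) := by positivity
  unfold badWeight
  by_cases hF : T ∈ F1 n k
  · obtain ⟨-, ⟨j, hj, hpos⟩ | ⟨j, hj, hle⟩⟩ : T ∈ B n d k := by
      by_contra hB
      exact hbad ⟨hF, hB⟩
    · have : (1 : ℝ) ≤ overlapCount T 1 4 := by
        exact_mod_cast hpos.trans_le (levelCount_le_overlapCount hj T)
      linarith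
    · have hlevel : (levelCount T j : ℝ) ≤ overlapCount T 1 2 := by
        exact_mod_cast levelCount_le_overlapCount (by omega) T
      have : (1 : ℝ) ≤ overlapCount T 1 2 / ((d : ℝ) ^ 2 / √n) :=
        (one_le_div (by positivity)).2 (hle.trans hlevel)
      linarith
  · have : (1 : ℝ) ≤ overlapCount T 2 2 := by exact_mod_cast overlapCount_two_two_pos hT hF
    linarith

lemma expect_badWeight_le (d : ℕ) (hn : 3 ≤ n) :
    𝔼 T ∈ powersetCardTuples (Fin k) (Fin n) 3, badWeight d T
      ≤ 18 * (k : ℝ) ^ 2 / n ^ 2 + 27 / 8 * (k : ℝ) ^ 4 / n ^ 3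
        + 9 / 2 * (k : ℝ) ^ 2 / n / ((d : ℝ) ^ 2 / √n) := by
  have hn' : (3 : ℝ) ≤ n := by exact_mod_cast hn
  have hmean (u m : ℕ) := expect_overlapCount (ι := Fin k) (V := Fin n) (r := 3) (by simpa) u m
  simp only [Fintype.card_fin] at hmean
  have hk2 : (k.choose 2 : ℝ) ≤ (k : ℝ) ^ 2 / 2 := Nat.choose_le_pow_div 2 k
  have hk4 : (k.choose 4 : ℝ) ≤ (k : ℝ) ^ 4 / 24 := Nat.choose_le_pow_div 4 k
  have hn2 : (n : ℝ) ^ 2 / 4 ≤ n.choose 2 := by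
    rw [Nat.cast_choose_two]
    nlinarith
  simp only [badWeight]
  rw [expect_add_distrib, expect_add_distrib, ← expect_div, hmean, hmean, hmean]
  simp only [Nat.choose_one_right, Nat.cast_ofNat, show Nat.choose 3 2 = 3 from rfl]
  gcongr
  · calc (n.choose 2 : ℝ) * (k.choose 2 * (3 / n.choose 2) ^ 2)
        = 9 * k.choose 2 / n.choose 2 := by
          have : (n.choose 2 : ℝ) ≠ 0 := by nlinarith
          field_simp
          norm_num
      _ ≤ 9 * ((k : ℝ) ^ 2 / 2) / ((n : ℝ) ^ 2 / 4) := by gcongr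
      _ = 18 * (k : ℝ) ^ 2 / n ^ 2 := by ring
  · calc (n : ℝ) * (k.choose 4 * (3 / n) ^ 4) ≤ n * ((k : ℝ) ^ 4 / 24 * (3 / n) ^ 4) := by gcongr
      _ = 27 / 8 * (k : ℝ) ^ 4 / n ^ 3 := by field_simp; ring
  · calc (n : ℝ) * (k.choose 2 * (3 / n) ^ 2) ≤ n * ((k : ℝ) ^ 2 / 2 * (3 / n) ^ 2) := by gcongr
      _ = 9 / 2 * (k : ℝ) ^ 2 / n := by field_simp; norm_num

lemma expect_badWeight_le_mul_div_sqrt {d : ℕ} {c : ℝ} (hn : 3 ≤ n) (hd : 0 < d)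
    (hdn : (d : ℝ) / √n ≤ 1) (hk : (k : ℝ) ≤ c * (d : ℝ) ^ ((3 : ℝ) / 2)) :
    𝔼 T ∈ powersetCardTuples (Fin k) (Fin n) 3, badWeight d T
      ≤ (45 / 2 * c ^ 2 + 27 / 8 * c ^ 4) * (d / √n) := by
  have hkpow := pow_le_pow_mul_rpow_mul k.cast_nonneg d.cast_nonneg hk
  have hk2 : (k : ℝ) ^ 2 ≤ c ^ 2 * (d : ℝ) ^ 3 := (hkpow 2).trans_eq (by norm_num)
  have hk4 : (k : ℝ) ^ 4 ≤ c ^ 4 * (d : ℝ) ^ 6 := (hkpow 4).trans_eq (by norm_num)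
  have hs : 1 ≤ √(n : ℝ) := Real.one_le_sqrt.2 (by exact_mod_cast (by omega : 1 ≤ n))
  have hsn : (n : ℝ) = √(n : ℝ) ^ 2 := (Real.sq_sqrt n.cast_nonneg).symm
  have hmean := expect_badWeight_le (k := k) d hn
  generalize √(n : ℝ) = s at *
  have hx : 0 ≤ (d : ℝ) / s := by positivity
  have hedge : 18 * (k : ℝ) ^ 2 / n ^ 2 ≤ 18 * c ^ 2 * (d / s) := by
    calc 18 * (k : ℝ) ^ 2 / n ^ 2 ≤ 18 * (c ^ 2 * (d : ℝ) ^ 3) / n ^ 2 := by gcongr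
      _ = 18 * c ^ 2 * (d / s) ^ 3 / s := by rw [hsn]; field_simp
      _ ≤ 18 * c ^ 2 * (d / s) ^ 3 := div_le_self (by positivity) hs
      _ ≤ 18 * c ^ 2 * (d / s) := by gcongr; exact pow_le_of_le_one hx hdn (by norm_num)
  have hvertex : 27 / 8 * (k : ℝ) ^ 4 / n ^ 3 ≤ 27 / 8 * c ^ 4 * (d / s) := by
    calc 27 / 8 * (k : ℝ) ^ 4 / n ^ 3 ≤ 27 / 8 * (c ^ 4 * (d : ℝ) ^ 6) / n ^ 3 := by gcongr
      _ = 27 / 8 * c ^ 4 * (d / s) ^ 6 := by rw [hsn]; field_simp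
      _ ≤ 27 / 8 * c ^ 4 * (d / s) := by gcongr; exact pow_le_of_le_one hx hdn (by norm_num)
  have hpair : 9 / 2 * (k : ℝ) ^ 2 / n / ((d : ℝ) ^ 2 / s) ≤ 9 / 2 * c ^ 2 * (d / s) := by
    calc 9 / 2 * (k : ℝ) ^ 2 / n / ((d : ℝ) ^ 2 / s)
        ≤ 9 / 2 * (c ^ 2 * (d : ℝ) ^ 3) / n / ((d : ℝ) ^ 2 / s) := by gcongr
      _ = 9 / 2 * c ^ 2 * (d / s) := by rw [hsn]; field_simp
  linarith

open scoped Classical in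
lemma card_bad_div_card_le {d : ℕ} {c : ℝ} (hn : 3 ≤ n) (hd : 0 < d)
    (hdn : (d : ℝ) / √n ≤ 1) (hk : (k : ℝ) ≤ c * (d : ℝ) ^ ((3 : ℝ) / 2)) :
    (#{T ∈ powersetCardTuples (Fin k) (Fin n) 3 | T ∉ F1 n k \ B n d k} : ℝ)
        / #(powersetCardTuples (Fin k) (Fin n) 3)
      ≤ (45 / 2 * c ^ 2 + 27 / 8 * c ^ 4) * (d / √n) := by
  refine le_trans ?_ (expect_badWeight_le_mul_div_sqrt hn hd hdn hk)
  refine card_filter_div_card_le_expect (fun T _ => badWeight_nonneg d T) fun T hT hbad => ?_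
  refine one_le_badWeight (by omega) hd (fun i => ?_) hbad
  exact mem_powersetCard_univ.1 (Fintype.mem_piFinset.1 hT i)

lemma abs_natCard_F1_diff_B_div_sub_one_le {d : ℕ} {c : ℝ} (hn : 3 ≤ n) (hd : 0 < d)
    (hdn : (d : ℝ) / √n ≤ 1) (hk : (k : ℝ) ≤ c * (d : ℝ) ^ ((3 : ℝ) / 2)) :
    |(Nat.card {T : Fin k → Finset (Fin n) // T ∈ F1 n k ∧ T ∉ B n d k} : ℝ) /
        ((n.descFactorial 3 : ℝ) / 6) ^ k - 1| ≤ (45 / 2 * c ^ 2 + 27 / 8 * c ^ 4) * (d / √n) := by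
  classical
  have hcard : Nat.card {T : Fin k → Finset (Fin n) // T ∈ F1 n k ∧ T ∉ B n d k}
      = #{T ∈ powersetCardTuples (Fin k) (Fin n) 3 | T ∈ F1 n k \ B n d k} :=
    Nat.subtype_card _ fun T => by
      simpa using fun hF _ => mem_powersetCardTuples_of_mem_F1 hF
  have hne : (powersetCardTuples (Fin k) (Fin n) 3).Nonempty := by
    simpa [powersetCardTuples] using fun _ => hn
  rw [hcard, ← card_powersetCardTuples_three, abs_card_filter_div_card_sub_one hne]
  exact card_bad_div_card_le hn hd hdn hk

lemma natCard_F1_inter_B_div_le {d : ℕ} {c : ℝ} (hn : 3 ≤ n) (hd : 0 < d)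
    (hdn : (d : ℝ) / √n ≤ 1) (hk : (k : ℝ) ≤ c * (d : ℝ) ^ ((3 : ℝ) / 2)) :
    (Nat.card {T : Fin k → Finset (Fin n) // T ∈ F1 n k ∧ T ∈ B n d k} : ℝ) /
        ((n.descFactorial 3 : ℝ) / 6) ^ k ≤ (45 / 2 * c ^ 2 + 27 / 8 * c ^ 4) * (d / √n) := by
  classical
  have hcard : Nat.card {T : Fin k → Finset (Fin n) // T ∈ F1 n k ∧ T ∈ B n d k}
      ≤ #{T ∈ powersetCardTuples (Fin k) (Fin n) 3 | T ∉ F1 n k \ B n d k} := by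
    rw [Nat.card_eq_fintype_card, Fintype.card_subtype]
    refine card_le_card fun T hT => ?_
    obtain ⟨hF, hB⟩ := (mem_filter.1 hT).2
    exact mem_filter.2 ⟨mem_powersetCardTuples_of_mem_F1 hF, fun h => h.2 hB⟩
  refine le_trans ?_ (card_bad_div_card_le hn hd hdn hk)
  rw [← card_powersetCardTuples_three]
  gcongr

end Triangles

theorem stmt17_general (c : ℝ) (d : ℕ → ℕ) (hd : ∀ n, 0 < d n)
    (hsmall : Tendsto (fun n => (d n : ℝ) / Real.sqrt n) atTop (nhds 0)) :
    ∀ ε : ℝ, 0 < ε → ∃ N : ℕ, ∀ n ≥ N, ∀ k : ℕ,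
      (k : ℝ) ≤ c * (d n : ℝ) ^ ((3 : ℝ) / 2) →
      |(Nat.card {T : Fin k → Finset (Fin n) // T ∈ F1 n k ∧ T ∉ B n (d n) k} : ℝ) /
          ((n.descFactorial 3 : ℝ) / 6) ^ k - 1| ≤ ε ∧
      (Nat.card {T : Fin k → Finset (Fin n) // T ∈ F1 n k ∧ T ∈ B n (d n) k} : ℝ) /
          ((n.descFactorial 3 : ℝ) / 6) ^ k ≤ ε := by
  intro ε hε
  have hbound : Tendsto (fun n => (45 / 2 * c ^ 2 + 27 / 8 * c ^ 4) * ((d n : ℝ) / Real.sqrt n))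
      atTop (nhds 0) := by
    simpa using hsmall.const_mul (45 / 2 * c ^ 2 + 27 / 8 * c ^ 4)
  obtain ⟨N, hN⟩ := eventually_atTop.1 ((hbound.eventually_le_const hε).and
    ((hsmall.eventually_le_const one_pos).and (eventually_ge_atTop 3)))
  refine ⟨N, fun n hn k hk => ?_⟩
  obtain ⟨hle, hdn, hn3⟩ := hN n hn
  exact ⟨(abs_natCard_F1_diff_B_div_sub_one_le hn3 (hd n) hdn hk).trans hle,
    (natCard_F1_inter_B_div_le hn3 (hd n) hdn hk).trans hle⟩

/-- Counting estimates: uniformly for `k ≤ c·d^{3/2}`,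
`|ℱ₁(k)\ℬ(k)| ∼ ((n)₃/6)^k` and `|ℱ₁(k)∩ℬ(k)| = o(((n)₃/6)^k)`. -/
theorem stmt17 (c : ℝ) (hc : 0 < c) (d : ℕ → ℕ) (hd : ∀ n, 0 < d n)
    (hinf : Tendsto (fun n => (d n : ℝ)) atTop atTop)
    (hsmall : Tendsto (fun n => (d n : ℝ) / Real.sqrt n) atTop (nhds 0)) :
    ∀ ε : ℝ, 0 < ε → ∃ N : ℕ, ∀ n ≥ N, ∀ k : ℕ, 1 ≤ k →
      (k : ℝ) ≤ c * (d n : ℝ) ^ ((3 : ℝ) / 2) →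
      |(Nat.card {T : Fin k → Finset (Fin n) // T ∈ F1 n k ∧ T ∉ B n (d n) k} : ℝ) /
          ((n.descFactorial 3 : ℝ) / 6) ^ k - 1| ≤ ε ∧
      (Nat.card {T : Fin k → Finset (Fin n) // T ∈ F1 n k ∧ T ∈ B n (d n) k} : ℝ) /
          ((n.descFactorial 3 : ℝ) / 6) ^ k ≤ ε :=
  fun ε hε => (stmt17_general c d hd hsmall ε hε).imp fun _ hN n hn k _ hk => hN n hn k hk
end
end
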